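/- (General sequential editing update with conflict resolution.) Let W ∈ ℝ^{d_o×d_i}, and let K_{A/P}, K_{P/A}, K_{AP} be key matrices with corresponding value matrices V_{A/P}, V_{P/A}, V_{AP} of matching column counts. Define the concatenations K_t := [K_{A/P} | K_{AP}], V_t := [V_{A/P} | V_{AP}], K_P := [K_{P/A} | K_{AP}], V_P := [V_{P/A} | V_{AP}]. Assume (i) (V_P − W K_P) K_Pᵀ = 0 (the pre-step weights exactly encode the preserved knowledge), and (ii) the matrix G := K_{A/P}K_{A/P}ᵀ + K_{P/A}K_{P/A}ᵀ + K_{AP}K_{AP}ᵀ is invertible. Then the unique minimizer over Δ ∈ ℝ^{d_o×d_i} of the objective ‖(W + Δ)K_{A/P} − V_{A/P}‖_F² + ‖(W + Δ)K_{P/A} − V_{P/A}‖_F² + ‖(W + Δ)K_{AP} − V_{AP}‖_F² equals ((V_t − W K_t)K_tᵀ − (V_{AP} − W K_{AP})K_{AP}ᵀ) (K_P K_Pᵀ + K_t K_tᵀ − K_{AP}K_{AP}ᵀ)⁻¹. -/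

import Mathlib

open Matrix BigOperators

noncomputable section

/-- Squared Frobenius norm of a real matrix. -/
def frobSq {n m : Type*} [Fintype n] [Fintype m] (A : Matrix n m ℝ) : ℝ :=
  ∑ i, ∑ j, (A i j) ^ 2

/-!
Write `K = [K_t | K_{P/A}]` and `V = [V_t | V_{P/A}]`. The objective is then the least-squares
functional `‖Δ K - (V - W K)‖²`, whose normal equation is `Δ (K Kᵀ) = (V - W K) Kᵀ`. A solution
leaves a residual orthogonal to every `D K`, so Pythagoras makes it a minimizer, unique because
`K Kᵀ` is invertible. The block `(V_{P/A} - W K_{P/A}) K_{P/A}ᵀ` of the right-hand side equals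
`-(V_{AP} - W K_{AP}) K_{AP}ᵀ` because the preserved knowledge is exactly encoded.
-/

section ConcatenatedColumns

variable {m n k l α : Type*}

theorem fromCols_sub_fromCols [Sub α] (A₁ B₁ : Matrix m k α) (A₂ B₂ : Matrix m l α) :
    fromCols A₁ A₂ - fromCols B₁ B₂ = fromCols (A₁ - B₁) (A₂ - B₂) := by
  ext i (j | j) <;> rfl

theorem fromCols_mul_transpose_self [Fintype k] [Fintype l] [Semiring α]
    (K₁ : Matrix n k α) (K₂ : Matrix n l α) :
    fromCols K₁ K₂ * (fromCols K₁ K₂)ᵀ = K₁ * K₁ᵀ + K₂ * K₂ᵀ := by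
  rw [transpose_fromCols, fromCols_mul_fromRows]

theorem fromCols_sub_mul_fromCols_mul_transpose [Fintype n] [Fintype k] [Fintype l] [Ring α]
    (W : Matrix m n α) (K₁ : Matrix n k α) (K₂ : Matrix n l α)
    (V₁ : Matrix m k α) (V₂ : Matrix m l α) :
    (fromCols V₁ V₂ - W * fromCols K₁ K₂) * (fromCols K₁ K₂)ᵀ =
      (V₁ - W * K₁) * K₁ᵀ + (V₂ - W * K₂) * K₂ᵀ := by
  rw [mul_fromCols, fromCols_sub_fromCols, transpose_fromCols, fromCols_mul_fromRows]

end ConcatenatedColumns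

section FrobSq

variable {m n k l : Type*} [Fintype m] [Fintype n] [Fintype k] [Fintype l]

theorem frobSq_eq_trace_mul_transpose (A : Matrix m n ℝ) : frobSq A = trace (A * Aᵀ) := by
  simp only [frobSq, sq, ← sum_hadamard_eq, hadamard_apply]

theorem frobSq_nonneg (A : Matrix m n ℝ) : 0 ≤ frobSq A :=
  Finset.sum_nonneg fun _ _ => Finset.sum_nonneg fun _ _ => sq_nonneg _

theorem frobSq_eq_zero_iff {A : Matrix m n ℝ} : frobSq A = 0 ↔ A = 0 := by
  rw [frobSq_eq_trace_mul_transpose, ← conjTranspose_eq_transpose_of_trivial,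
    trace_mul_conjTranspose_self_eq_zero_iff]

theorem frobSq_fromCols (A : Matrix m n ℝ) (B : Matrix m k ℝ) :
    frobSq (fromCols A B) = frobSq A + frobSq B := by
  simp only [frobSq_eq_trace_mul_transpose, transpose_fromCols, fromCols_mul_fromRows, trace_add]

theorem frobSq_mul_fromCols_sub_fromCols (X : Matrix m n ℝ) (K₁ : Matrix n k ℝ)
    (K₂ : Matrix n l ℝ) (V₁ : Matrix m k ℝ) (V₂ : Matrix m l ℝ) :
    frobSq (X * fromCols K₁ K₂ - fromCols V₁ V₂) =
      frobSq (X * K₁ - V₁) + frobSq (X * K₂ - V₂) := by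
  rw [mul_fromCols, fromCols_sub_fromCols, frobSq_fromCols]

theorem frobSq_add_of_trace_mul_transpose_eq_zero {A B : Matrix m n ℝ}
    (h : trace (A * Bᵀ) = 0) : frobSq (A + B) = frobSq A + frobSq B := by
  have h' : trace (B * Aᵀ) = 0 := by
    rw [← trace_transpose, transpose_mul, transpose_transpose, h]
  simp only [frobSq_eq_trace_mul_transpose, transpose_add, Matrix.add_mul, Matrix.mul_add,
    trace_add, h, h', add_zero, zero_add]

end FrobSq

section LeastSquares

variable {m n k : Type*} [Fintype m] [Fintype n] [Fintype k]
  {K : Matrix n k ℝ} {R : Matrix m k ℝ} {X : Matrix m n ℝ}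

theorem frobSq_mul_sub_of_normal_equation (hX : X * (K * Kᵀ) = R * Kᵀ) (Y : Matrix m n ℝ) :
    frobSq (Y * K - R) = frobSq (X * K - R) + frobSq ((Y - X) * K) := by
  have residual_orthogonal : (X * K - R) * Kᵀ = 0 := by
    rw [Matrix.sub_mul, Matrix.mul_assoc, hX, sub_self]
  have split : Y * K - R = (X * K - R) + (Y - X) * K := by
    rw [Matrix.sub_mul]
    abel
  rw [split, frobSq_add_of_trace_mul_transpose_eq_zero]
  rw [transpose_mul, ← Matrix.mul_assoc, residual_orthogonal, Matrix.zero_mul, trace_zero]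

theorem frobSq_mul_sub_le_of_normal_equation (hX : X * (K * Kᵀ) = R * Kᵀ) (Y : Matrix m n ℝ) :
    frobSq (X * K - R) ≤ frobSq (Y * K - R) := by
  rw [frobSq_mul_sub_of_normal_equation hX Y]
  exact le_add_of_nonneg_right (frobSq_nonneg _)

theorem eq_of_frobSq_mul_sub_le_of_normal_equation [DecidableEq n] (hK : IsUnit (K * Kᵀ))
    (hX : X * (K * Kᵀ) = R * Kᵀ) {Y : Matrix m n ℝ}
    (hY : frobSq (Y * K - R) ≤ frobSq (X * K - R)) : Y = X := by
  rw [frobSq_mul_sub_of_normal_equation hX Y, add_le_iff_nonpos_right] at hY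
  have hYX : (Y - X) * K = 0 := frobSq_eq_zero_iff.mp (hY.antisymm (frobSq_nonneg _))
  have gram_det : IsUnit (K * Kᵀ).det := (isUnit_iff_isUnit_det _).mp hK
  rw [← sub_eq_zero, ← mul_nonsing_inv_cancel_right _ (Y - X) gram_det, ← Matrix.mul_assoc (Y - X),
    hYX, Matrix.zero_mul, Matrix.zero_mul]

end LeastSquares

theorem conflict_resolution_sequential_update
    {dOut dIn a b c : ℕ}
    (W : Matrix (Fin dOut) (Fin dIn) ℝ)
    (KAP' : Matrix (Fin dIn) (Fin a) ℝ) (VAP' : Matrix (Fin dOut) (Fin a) ℝ)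
    (KPA' : Matrix (Fin dIn) (Fin b) ℝ) (VPA' : Matrix (Fin dOut) (Fin b) ℝ)
    (KAP : Matrix (Fin dIn) (Fin c) ℝ) (VAP : Matrix (Fin dOut) (Fin c) ℝ) :
    let Kt := Matrix.fromCols KAP' KAP
    let Vt := Matrix.fromCols VAP' VAP
    let KP := Matrix.fromCols KPA' KAP
    let VP := Matrix.fromCols VPA' VAP
    ∀ _hpre : (VP - W * KP) * KPᵀ = 0,
    ∀ _hG : Invertible (KAP' * KAP'ᵀ + KPA' * KPA'ᵀ + KAP * KAPᵀ),
    let f : Matrix (Fin dOut) (Fin dIn) ℝ → ℝ := fun Δ =>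
      frobSq ((W + Δ) * KAP' - VAP') + frobSq ((W + Δ) * KPA' - VPA') +
        frobSq ((W + Δ) * KAP - VAP)
    let Δstar : Matrix (Fin dOut) (Fin dIn) ℝ :=
      ((Vt - W * Kt) * Ktᵀ - (VAP - W * KAP) * KAPᵀ) *
        (KP * KPᵀ + Kt * Ktᵀ - KAP * KAPᵀ)⁻¹
    (∀ Δ, f Δstar ≤ f Δ) ∧ (∀ Δ, f Δ ≤ f Δstar → Δ = Δstar) := by
  intro Kt Vt KP VP hpre hG f Δstar
  let K := fromCols Kt KPA'
  let R := fromCols Vt VPA' - W * K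
  have gram_isUnit : IsUnit (K * Kᵀ) := by
    convert isUnit_of_invertible (KAP' * KAP'ᵀ + KPA' * KPA'ᵀ + KAP * KAPᵀ) using 1
    simp only [K, Kt, fromCols_mul_transpose_self, add_right_comm]
  have gram : KP * KPᵀ + Kt * Ktᵀ - KAP * KAPᵀ = K * Kᵀ := by
    simp only [K, KP, fromCols_mul_transpose_self KPA', fromCols_mul_transpose_self Kt]
    abel
  have preserved : (VPA' - W * KPA') * KPA'ᵀ = -((VAP - W * KAP) * KAPᵀ) :=
    eq_neg_of_add_eq_zero_left ((fromCols_sub_mul_fromCols_mul_transpose ..).symm.trans hpre)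
  have moment : (Vt - W * Kt) * Ktᵀ - (VAP - W * KAP) * KAPᵀ = R * Kᵀ := by
    rw [fromCols_sub_mul_fromCols_mul_transpose W Kt KPA', preserved, sub_eq_add_neg]
  have normal_equation : Δstar * (K * Kᵀ) = R * Kᵀ := by
    simp only [Δstar, gram, moment]
    exact nonsing_inv_mul_cancel_right _ _ ((isUnit_iff_isUnit_det _).mp gram_isUnit)
  have objective (Δ) : f Δ = frobSq (Δ * K - R) := by
    rw [sub_sub_eq_add_sub, ← Matrix.add_mul, add_comm Δ, frobSq_mul_fromCols_sub_fromCols,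
      frobSq_mul_fromCols_sub_fromCols, add_right_comm]
  simp only [objective]
  exact ⟨frobSq_mul_sub_le_of_normal_equation normal_equation,
    fun _ => eq_of_frobSq_mul_sub_le_of_normal_equation gram_isUnit normal_equation⟩
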